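/- arXiv:1602.08643 — 3 statements merged into one kernel-verified Lean document; each statement's English description precedes it below -/
import Mathlib

section
/- There exists a constant C > 0, depending only on κ₁ and κ₂, such that for all σ₁, σ₂ ∈ ℝ, |Λ(σ₁) − Λ(σ₂)| ≤ C·|σ₁ − σ₂|. -/
/-!
The derivative of `Λ` is the third centred moment of `μ_σ`, so it suffices to bound low moments of
`μ_σ` uniformly in `σ`.

Fix `σ`. Since `ψ'' ≥ κ₁ > 0`, the derivative `ψ'` is onto, so `ψ' x₀ = σ` for some `x₀`. Recentring,
the potential `φ x = ψ (x + x₀) - ψ x₀ - σ x` satisfies `φ 0 = φ' 0 = 0` and `κ₁ ≤ φ'' ≤ κ₂`, hence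
`κ₁ / 2 * x² ≤ φ x ≤ κ₂ / 2 * x²`, and `gibbsVar ψ (σ + t) = gibbsVar φ t`
(`gibbsVar_shift`). The two Gaussian bounds dominate the moments of `exp (-φ)` by Gaussian moments
with parameter `κ₁ / 2`, and bound its mass below by the Gaussian mass with parameter `κ₂ / 2`. So
the derivative of `gibbsVar φ` at `0`, a polynomial in the normalized moments, is bounded in terms
of `κ₁` and `κ₂` only (`exists_hasDerivAt_gibbsVar_zero`). The mean value inequality concludes.
-/

noncomputable section

open MeasureTheory Real

/-- The mean of the measure `μ_σ(dx) ∝ exp(-f(x)+σx) dx`. -/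
def gibbsMean (f : ℝ → ℝ) (σ : ℝ) : ℝ :=
  (∫ y : ℝ, y * Real.exp (-f y + σ * y)) / (∫ y : ℝ, Real.exp (-f y + σ * y))

/-- The variance `Λ(σ)` of the measure `μ_σ(dx) ∝ exp(-f(x)+σx) dx`. -/
def gibbsVar (f : ℝ → ℝ) (σ : ℝ) : ℝ :=
  (∫ x : ℝ, (x - gibbsMean f σ) ^ 2 * Real.exp (-f x + σ * x)) /
    (∫ x : ℝ, Real.exp (-f x + σ * x))

open ProbabilityTheory Filter Set

/-! ### Moments of sub-Gaussian densities -/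

/-- The unnormalized `k`-th moment of the density `exp (-f x + σ x)`. -/
def gibbsMoment (f : ℝ → ℝ) (k : ℕ) (σ : ℝ) : ℝ :=
  ∫ x : ℝ, x ^ k * Real.exp (-f x + σ * x)

/-- The `k`-th absolute moment of the unnormalized Gaussian `exp (-b x²)`. -/
def gaussAbsMoment (b : ℝ) (k : ℕ) : ℝ :=
  ∫ x : ℝ, |x| ^ k * Real.exp (-b * x ^ 2)

lemma integrable_abs_pow_mul_gauss {b : ℝ} (hb : 0 < b) (k : ℕ) :
    Integrable (fun x : ℝ => |x| ^ k * Real.exp (-b * x ^ 2)) := by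
  have h := (integrable_rpow_mul_exp_neg_mul_sq hb (s := k)
    (by have : (0 : ℝ) ≤ k := k.cast_nonneg
        linarith)).norm
  refine h.congr (ae_of_all _ fun x => ?_)
  simp

/-- Sub-Gaussian densities have all exponential moments, for the measure `exp (-φ x) dx`. -/
lemma integrableExpSet_eq_univ {φ : ℝ → ℝ} (hφ : Continuous φ) {b : ℝ} (hb : 0 < b)
    (hlow : ∀ x, b * x ^ 2 ≤ φ x) :
    integrableExpSet (fun x : ℝ => x)
      (volume.withDensity fun x => ((Real.exp (-φ x)).toNNReal : ENNReal)) = univ := by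
  refine eq_univ_of_forall fun t => ?_
  change Integrable _ _
  rw [integrable_withDensity_iff_integrable_smul (by fun_prop)]
  have hg : Integrable (fun x : ℝ => Real.exp (t ^ 2 / (2 * b)) * Real.exp (-(b / 2) * x ^ 2)) :=
    (integrable_exp_neg_mul_sq (half_pos hb)).const_mul _
  refine hg.mono' (Continuous.aestronglyMeasurable (by fun_prop)) (ae_of_all _ fun x => ?_)
  rw [NNReal.smul_def, smul_eq_mul, Real.coe_toNNReal _ (Real.exp_pos _).le, ← Real.exp_add,
    ← Real.exp_add, Real.norm_eq_abs, Real.abs_exp, Real.exp_le_exp]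
  -- Young's inequality for `t * x`.
  have h1 : t * x ≤ t ^ 2 / (2 * b) + b / 2 * x ^ 2 := by
    have : t ^ 2 / (2 * b) + b / 2 * x ^ 2 - t * x = (t - b * x) ^ 2 / (2 * b) := by
      field_simp; ring
    have h2 : 0 ≤ (t - b * x) ^ 2 / (2 * b) := by positivity
    linarith
  have := hlow x
  linarith

lemma integrable_gibbsMoment {φ : ℝ → ℝ} (hφ : Continuous φ) {b : ℝ} (hb : 0 < b)
    (hlow : ∀ x, b * x ^ 2 ≤ φ x) (k : ℕ) (t : ℝ) :
    Integrable (fun x : ℝ => x ^ k * Real.exp (-φ x + t * x)) := by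
  have h := integrable_pow_mul_exp_of_mem_interior_integrableExpSet (v := t)
    (by rw [integrableExpSet_eq_univ hφ hb hlow]; simp) k
  rw [integrable_withDensity_iff_integrable_smul (by fun_prop)] at h
  refine h.congr (ae_of_all _ fun x => ?_)
  simp only [NNReal.smul_def, smul_eq_mul, Real.coe_toNNReal _ (Real.exp_pos _).le, Real.exp_add]
  ring

lemma hasDerivAt_gibbsMoment {φ : ℝ → ℝ} (hφ : Continuous φ) {b : ℝ} (hb : 0 < b)
    (hlow : ∀ x, b * x ^ 2 ≤ φ x) (k : ℕ) (t : ℝ) :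
    HasDerivAt (gibbsMoment φ k) (gibbsMoment φ (k + 1) t) t := by
  have h := hasDerivAt_integral_pow_mul_exp_real (t := t)
    (by rw [integrableExpSet_eq_univ hφ hb hlow]; simp) k
  have e : ∀ (n : ℕ) (s : ℝ), ∫ x : ℝ, x ^ n * Real.exp (s * x)
      ∂(volume.withDensity fun x => ((Real.exp (-φ x)).toNNReal : ENNReal))
      = gibbsMoment φ n s := by
    intro n s
    rw [integral_withDensity_eq_integral_smul (by fun_prop), gibbsMoment]
    refine integral_congr_ae (ae_of_all _ fun x => ?_)
    simp only [NNReal.smul_def, smul_eq_mul, Real.coe_toNNReal _ (Real.exp_pos _).le, Real.exp_add]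
    ring
  simpa only [e] using h

lemma gibbsMoment_zero_pos {φ : ℝ → ℝ} (hφ : Continuous φ) {b : ℝ} (hb : 0 < b)
    (hlow : ∀ x, b * x ^ 2 ≤ φ x) (t : ℝ) : 0 < gibbsMoment φ 0 t := by
  have h := integrable_gibbsMoment hφ hb hlow 0 t
  simp only [gibbsMoment, pow_zero, one_mul] at h ⊢
  exact integral_exp_pos h

lemma gibbsVar_eq {φ : ℝ → ℝ} (hφ : Continuous φ) {b : ℝ} (hb : 0 < b)
    (hlow : ∀ x, b * x ^ 2 ≤ φ x) (t : ℝ) :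
    gibbsVar φ t = gibbsMoment φ 2 t / gibbsMoment φ 0 t
      - (gibbsMoment φ 1 t / gibbsMoment φ 0 t) ^ 2 := by
  have hm : gibbsMean φ t = gibbsMoment φ 1 t / gibbsMoment φ 0 t := by
    simp [gibbsMean, gibbsMoment]
  have hpos := gibbsMoment_zero_pos hφ hb hlow t
  have i := fun k => integrable_gibbsMoment hφ hb hlow k t
  have hnum : ∀ m : ℝ, ∫ x : ℝ, (x - m) ^ 2 * Real.exp (-φ x + t * x)
      = gibbsMoment φ 2 t - 2 * m * gibbsMoment φ 1 t + m ^ 2 * gibbsMoment φ 0 t := by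
    intro m
    have e : (fun x : ℝ => (x - m) ^ 2 * Real.exp (-φ x + t * x)) = fun x =>
        (x ^ 2 * Real.exp (-φ x + t * x) - 2 * m * (x ^ 1 * Real.exp (-φ x + t * x)))
          + m ^ 2 * (x ^ 0 * Real.exp (-φ x + t * x)) := by
      funext x; ring
    rw [e, integral_add (by exact (i 2).sub ((i 1).const_mul _)) ((i 0).const_mul _),
      integral_sub (i 2) ((i 1).const_mul _), integral_const_mul, integral_const_mul]
    rfl
  have hden : ∫ x : ℝ, Real.exp (-φ x + t * x) = gibbsMoment φ 0 t := by simp [gibbsMoment]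
  rw [gibbsVar, hnum, hden, hm]
  field_simp
  ring

/-! ### Bounding the derivative of the variance for a recentred potential -/

lemma abs_gibbsMoment_le {φ : ℝ → ℝ} {b : ℝ} (hb : 0 < b)
    (hlow : ∀ x, b * x ^ 2 ≤ φ x) (k : ℕ) :
    |gibbsMoment φ k 0| ≤ gaussAbsMoment b k := by
  rw [← Real.norm_eq_abs]
  refine norm_integral_le_of_norm_le (integrable_abs_pow_mul_gauss hb k) (ae_of_all _ fun x => ?_)
  rw [norm_mul, norm_pow, Real.norm_eq_abs, Real.norm_eq_abs, Real.abs_exp]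
  have := hlow x
  gcongr
  linarith

lemma gaussAbsMoment_nonneg (b : ℝ) (k : ℕ) : 0 ≤ gaussAbsMoment b k :=
  integral_nonneg fun x => by positivity

lemma gaussAbsMoment_zero_pos {b : ℝ} (hb : 0 < b) : 0 < gaussAbsMoment b 0 := by
  have h := integrable_abs_pow_mul_gauss hb 0
  simp only [gaussAbsMoment, pow_zero, one_mul] at h ⊢
  exact integral_exp_pos h

lemma gaussAbsMoment_le_gibbsMoment {φ : ℝ → ℝ} (hφ : Continuous φ) {b c : ℝ} (hb : 0 < b)
    (hc : 0 < c) (hlow : ∀ x, b * x ^ 2 ≤ φ x) (hup : ∀ x, φ x ≤ c * x ^ 2) :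
    gaussAbsMoment c 0 ≤ gibbsMoment φ 0 0 := by
  refine integral_mono (integrable_abs_pow_mul_gauss hc 0)
    (integrable_gibbsMoment hφ hb hlow 0 0) fun x => ?_
  have := hup x
  simp only [pow_zero, one_mul]
  gcongr
  linarith

/-- A bound, in terms of Gaussian moments, for the third centred moment of any probability density
proportional to `exp (-φ)` with `b x² ≤ φ x ≤ c x²`. -/
def thirdMomentBound (b c : ℝ) : ℝ :=
  gaussAbsMoment b 3 / gaussAbsMoment c 0
    + 3 * (gaussAbsMoment b 2 / gaussAbsMoment c 0) * (gaussAbsMoment b 1 / gaussAbsMoment c 0)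
    + 2 * (gaussAbsMoment b 1 / gaussAbsMoment c 0) ^ 3

lemma exists_hasDerivAt_gibbsVar_zero {φ : ℝ → ℝ} (hφ : Continuous φ) {b c : ℝ} (hb : 0 < b)
    (hc : 0 < c) (hlow : ∀ x, b * x ^ 2 ≤ φ x) (hup : ∀ x, φ x ≤ c * x ^ 2) :
    ∃ D, HasDerivAt (gibbsVar φ) D 0 ∧ |D| ≤ thirdMomentBound b c := by
  have hpos := gibbsMoment_zero_pos hφ hb hlow 0
  have d := fun k => hasDerivAt_gibbsMoment hφ hb hlow k 0
  have key : ∀ k, |gibbsMoment φ k 0 / gibbsMoment φ 0 0|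
      ≤ gaussAbsMoment b k / gaussAbsMoment c 0 := by
    intro k
    rw [abs_div, abs_of_pos hpos]
    exact div_le_div₀ (gaussAbsMoment_nonneg b k) (abs_gibbsMoment_le hb hlow k)
      (gaussAbsMoment_zero_pos hc) (gaussAbsMoment_le_gibbsMoment hφ hb hc hlow hup)
  refine ⟨gibbsMoment φ 3 0 / gibbsMoment φ 0 0
    - 3 * (gibbsMoment φ 2 0 / gibbsMoment φ 0 0) * (gibbsMoment φ 1 0 / gibbsMoment φ 0 0)
    + 2 * (gibbsMoment φ 1 0 / gibbsMoment φ 0 0) ^ 3, ?_, ?_⟩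
  · rw [show gibbsVar φ = fun t => gibbsMoment φ 2 t / gibbsMoment φ 0 t
      - (gibbsMoment φ 1 t / gibbsMoment φ 0 t) ^ 2 from funext (gibbsVar_eq hφ hb hlow)]
    refine (((d 2).div (d 0) hpos.ne').sub (((d 1).div (d 0) hpos.ne').pow 2)).congr_deriv ?_
    simp only [Pi.div_apply]
    norm_num
    field_simp
    ring
  · have h1 := key 1
    have h2 := key 2
    have h3 := key 3
    set p := gibbsMoment φ 1 0 / gibbsMoment φ 0 0
    set q := gibbsMoment φ 2 0 / gibbsMoment φ 0 0
    set r := gibbsMoment φ 3 0 / gibbsMoment φ 0 0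
    calc |r - 3 * q * p + 2 * p ^ 3| ≤ |r| + |3 * q * p| + |2 * p ^ 3| :=
          (abs_add_le _ _).trans (by gcongr; exact abs_sub _ _)
      _ = |r| + 3 * |q| * |p| + 2 * |p| ^ 3 := by simp [abs_mul, abs_pow]
      _ ≤ thirdMomentBound b c := by
          unfold thirdMomentBound
          have := (abs_nonneg q).trans h2
          gcongr

/-! ### Recentring at the mode -/

/-- Translating the potential, tilting it and adding a constant to it only translates `gibbsVar`.
The Gaussian lower bound guarantees that the integrals converge. -/
lemma gibbsVar_shift {ψ : ℝ → ℝ} (hψ : Continuous ψ) (x₀ a σ : ℝ) {b : ℝ} (hb : 0 < b)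
    (hlow : ∀ x, b * x ^ 2 ≤ ψ (x + x₀) - a - σ * x) (t : ℝ) :
    gibbsVar ψ (σ + t) = gibbsVar (fun x => ψ (x + x₀) - a - σ * x) t := by
  set φ : ℝ → ℝ := fun x => ψ (x + x₀) - a - σ * x with hφ
  have hφc : Continuous φ := by fun_prop
  have i := fun k => integrable_gibbsMoment hφc hb hlow k t
  have hpos := gibbsMoment_zero_pos hφc hb hlow t
  set K : ℝ := Real.exp (-a + (σ + t) * x₀) with hK
  have hK0 : K ≠ 0 := (Real.exp_pos _).ne'
  have hexp : ∀ x, Real.exp (-ψ (x + x₀) + (σ + t) * (x + x₀))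
      = K * Real.exp (-φ x + t * x) := by
    intro x
    rw [hK, ← Real.exp_add]
    congr 1
    simp only [hφ]
    ring
  have hint : ∀ g : ℝ → ℝ, ∫ x, g x * Real.exp (-ψ x + (σ + t) * x)
      = K * ∫ x, g (x + x₀) * Real.exp (-φ x + t * x) := by
    intro g
    rw [← integral_add_right_eq_self _ x₀, ← integral_const_mul]
    refine integral_congr_ae (ae_of_all _ fun x => ?_)
    simp only [hexp]
    ring
  have hφ0 : ∫ x, Real.exp (-φ x + t * x) = gibbsMoment φ 0 t := by simp [gibbsMoment]
  have hφ1 : ∫ x, x * Real.exp (-φ x + t * x) = gibbsMoment φ 1 t := by simp [gibbsMoment]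
  have hden : ∫ x, Real.exp (-ψ x + (σ + t) * x) = K * gibbsMoment φ 0 t := by
    simpa only [one_mul, hφ0] using hint (fun _ => 1)
  have hmean : gibbsMean ψ (σ + t) = gibbsMean φ t + x₀ := by
    have e : (fun x : ℝ => (x + x₀) * Real.exp (-φ x + t * x)) = fun x =>
        x ^ 1 * Real.exp (-φ x + t * x) + x₀ * (x ^ 0 * Real.exp (-φ x + t * x)) := by
      funext x; ring
    have h1 : ∫ x, (x + x₀) * Real.exp (-φ x + t * x)
        = gibbsMoment φ 1 t + x₀ * gibbsMoment φ 0 t := by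
      rw [e, integral_add (i 1) ((i 0).const_mul _), integral_const_mul]
      rfl
    rw [gibbsMean, gibbsMean, hden, hint (fun y => y), h1, hφ0, hφ1]
    field_simp
  rw [gibbsVar, gibbsVar, hden, hint (fun y => (y - gibbsMean ψ (σ + t)) ^ 2), hmean, hφ0,
    mul_div_mul_left _ _ hK0]
  simp only [add_sub_add_right_eq_sub]

lemma nonneg_of_deriv2_nonneg {g g' g'' : ℝ → ℝ} (hg : ∀ x, HasDerivAt g (g' x) x)
    (hg' : ∀ x, HasDerivAt g' (g'' x) x) (hg'' : ∀ x, 0 ≤ g'' x) (h0 : g 0 = 0) (h0' : g' 0 = 0)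
    (x : ℝ) : 0 ≤ g x := by
  have hmono : Monotone g' := monotone_of_hasDerivAt_nonneg hg' hg''
  have hd : deriv g = g' := funext fun x => (hg x).deriv
  have hconv : ConvexOn ℝ univ g :=
    Monotone.convexOn_univ_of_deriv (fun x => (hg x).differentiableAt) (hd ▸ hmono)
  have hmin := hconv.isMinOn_of_rightDeriv_eq_zero (x := 0) (by simp)
    (by rw [(hg 0).hasDerivWithinAt.derivWithin (uniqueDiffWithinAt_Ioi 0), h0'])
  have := hmin (mem_univ x)
  simpa [h0] using this

/-- The derivative at `σ` of `gibbsVar ψ` is bounded by recentring at the mode `x₀` of `μ_σ`. -/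
lemma exists_hasDerivAt_gibbsVar {κ₁ κ₂ : ℝ} (hκ₁ : 0 < κ₁) (hκ : κ₁ ≤ κ₂) {ψ : ℝ → ℝ}
    (hψ : ContDiff ℝ 2 ψ) (h : ∀ y : ℝ, κ₁ ≤ deriv (deriv ψ) y ∧ deriv (deriv ψ) y ≤ κ₂) (σ : ℝ) :
    ∃ D, HasDerivAt (gibbsVar ψ) D σ ∧ |D| ≤ thirdMomentBound (κ₁ / 2) (κ₂ / 2) := by
  have hψ1 : ContDiff ℝ 1 (deriv ψ) := ContDiff.deriv' hψ
  have d1 : ∀ x, HasDerivAt ψ (deriv ψ x) x := fun x =>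
    (hψ.differentiable (by norm_num) x).hasDerivAt
  have d2 : ∀ x, HasDerivAt (deriv ψ) (deriv (deriv ψ) x) x := fun x =>
    (hψ1.differentiable (by norm_num) x).hasDerivAt
  obtain ⟨x₀, hx₀⟩ : ∃ x₀, deriv ψ x₀ = σ := by
    have hmono : Monotone fun x => deriv ψ x - κ₁ * x :=
      monotone_of_hasDerivAt_nonneg
        (fun x => (d2 x).sub ((hasDerivAt_id x).const_mul κ₁))
        (fun x => by simpa using (h x).1)
    have hlin : ∀ x, deriv ψ x = (deriv ψ x - κ₁ * x) + κ₁ * x := fun x => by ring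
    refine hψ1.continuous.surjective ?_ ?_ σ
    · refine tendsto_atTop_mono' _ ?_
        (tendsto_atTop_add_const_left _ (deriv ψ 0) (tendsto_id.const_mul_atTop hκ₁))
      filter_upwards [eventually_ge_atTop 0] with x hx
      have := hmono hx
      simp only [id] at *
      linarith
    · refine tendsto_atBot_mono' _ ?_
        (tendsto_atBot_add_const_left _ (deriv ψ 0) (tendsto_id.const_mul_atBot hκ₁))
      filter_upwards [eventually_le_atBot 0] with x hx
      have := hmono hx
      simp only [id] at *
      linarith
  set φ : ℝ → ℝ := fun x => ψ (x + x₀) - ψ x₀ - σ * x with hφ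
  have hφc : Continuous φ := by
    have := hψ.continuous
    fun_prop
  have e1 : ∀ x, HasDerivAt φ (deriv ψ (x + x₀) - σ) x := fun x =>
    ((((d1 (x + x₀)).comp_add_const x x₀).sub_const (ψ x₀)).sub
      ((hasDerivAt_id x).const_mul σ)).congr_deriv (by simp)
  have e2 : ∀ x, HasDerivAt (fun x => deriv ψ (x + x₀) - σ) (deriv (deriv ψ) (x + x₀)) x :=
    fun x => ((d2 (x + x₀)).comp_add_const x x₀).sub_const σ
  have q1 : ∀ κ x : ℝ, HasDerivAt (fun x => κ / 2 * x ^ 2) (κ * x) x := fun κ x =>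
    ((hasDerivAt_pow 2 x).const_mul (κ / 2)).congr_deriv (by push_cast; ring)
  have q2 : ∀ κ x : ℝ, HasDerivAt (fun x => κ * x) κ x := fun κ x => by
    simpa using (hasDerivAt_id x).const_mul κ
  have hlow : ∀ x, κ₁ / 2 * x ^ 2 ≤ φ x := fun x => sub_nonneg.1 <|
    nonneg_of_deriv2_nonneg (g := fun x => φ x - κ₁ / 2 * x ^ 2)
      (fun x => (e1 x).sub (q1 κ₁ x)) (fun x => (e2 x).sub (q2 κ₁ x))
      (fun x => sub_nonneg.2 (h _).1) (by simp [hφ]) (by simp [hx₀]) x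
  have hup : ∀ x, φ x ≤ κ₂ / 2 * x ^ 2 := fun x => sub_nonneg.1 <|
    nonneg_of_deriv2_nonneg (g := fun x => κ₂ / 2 * x ^ 2 - φ x)
      (fun x => (q1 κ₂ x).sub (e1 x)) (fun x => (q2 κ₂ x).sub (e2 x))
      (fun x => sub_nonneg.2 (h _).2) (by simp [hφ]) (by simp [hx₀]) x
  obtain ⟨D, hD, hle⟩ := exists_hasDerivAt_gibbsVar_zero hφc (half_pos hκ₁)
    (half_pos (hκ₁.trans_le hκ)) hlow hup
  refine ⟨D, ?_, hle⟩
  have hs : gibbsVar ψ = fun s => gibbsVar φ (s - σ) := funext fun s => by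
    rw [← gibbsVar_shift hψ.continuous x₀ (ψ x₀) σ (half_pos hκ₁) hlow (s - σ)]
    congr 1
    ring
  rw [hs]
  exact HasDerivAt.comp_sub_const σ σ (by simpa using hD)

/-- the variance `Λ` is Lipschitz, with a constant depending
only on `κ₁` and `κ₂`. -/
theorem variance_lipschitz
    (κ₁ κ₂ : ℝ) (hκ₁ : 0 < κ₁) (hκ : κ₁ ≤ κ₂) :
    ∃ C > 0, ∀ ψ : ℝ → ℝ, ContDiff ℝ 2 ψ →
      (∀ y : ℝ, κ₁ ≤ deriv (deriv ψ) y ∧ deriv (deriv ψ) y ≤ κ₂) →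
      ∀ σ₁ σ₂ : ℝ, |gibbsVar ψ σ₁ - gibbsVar ψ σ₂| ≤ C * |σ₁ - σ₂| := by
  refine ⟨|thirdMomentBound (κ₁ / 2) (κ₂ / 2)| + 1, by positivity, fun ψ hψ h σ₁ σ₂ => ?_⟩
  choose D hD hDle using exists_hasDerivAt_gibbsVar hκ₁ hκ hψ h
  refine convex_univ.norm_image_sub_le_of_norm_hasDerivWithin_le (f' := D)
    (fun x _ => (hD x).hasDerivWithinAt) (fun x _ => ?_) (mem_univ σ₂) (mem_univ σ₁)
  exact (hDle x).trans ((le_abs_self _).trans (by linarith))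
end
end

section
/- For every x ∈ ℝ the supremum defining W(x) is attained at a unique σ_x ∈ ℝ, characterized by Ψ(σ_x) = x; W is twice differentiable with W'(x) = σ_x and W''(x) = 1/Ψ'(σ_x), and consequently κ₁ ≤ W''(x) ≤ κ₂ for all x ∈ ℝ. -/
/-!
Write `M n σ = ∫ yⁿ exp (-ψ y + σ y) dy` and `Λ = log (M 0)`. Since `ψ'' ≥ κ₁ > 0`, the weight
`exp (-ψ)` has Gaussian decay, so all `M n` are finite, `(M n)' = M (n + 1)`, `Λ' = Ψ`, and
`Ψ' (σ)` is the variance of the tilted probability measure with density proportional to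
`exp (-ψ y + σ y)`.

The quantitative input is `1/κ₂ ≤ Ψ' ≤ 1/κ₁`. Let `m = Ψ σ` be the mean. Integration by parts gives
`∫ (y - m) (ψ' y - σ) e^{-ψ y + σ y} dy = M 0 σ`, and `σ` may be replaced by `ψ' m` because
`y - m` has mean zero. As `κ₁ (y - m)² ≤ (y - m) (ψ' y - ψ' m) ≤ κ₂ (y - m)²` pointwise,
integrating gives `κ₁ Ψ' ≤ 1 ≤ κ₂ Ψ'`.

Hence `Ψ` is an increasing bijection of `ℝ`. By convexity of `Λ`, `σ ↦ σ x - Λ σ` is maximal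
exactly at `σ = Ψ⁻¹ x`, so `W x = Ψ⁻¹ x * x - Λ (Ψ⁻¹ x)`; differentiating, `W' = Ψ⁻¹`, and the inverse
function rule gives `W'' = 1 / Ψ'(Ψ⁻¹ x)`.
-/

noncomputable section

open MeasureTheory Real

/-- The Cauchy–Born strain energy `W(x)`. -/
def W (ψ : ℝ → ℝ) (x : ℝ) : ℝ :=
  ⨆ σ : ℝ, (σ * x - Real.log (∫ y : ℝ, Real.exp (-ψ y + σ * y)))

/-- `Ψ(σ) = (∫ y exp(-ψ(y)+σy) dy) / (∫ exp(-ψ(y)+σy) dy)`. -/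
def Psi (ψ : ℝ → ℝ) (σ : ℝ) : ℝ :=
  (∫ y : ℝ, y * Real.exp (-ψ y + σ * y)) / (∫ y : ℝ, Real.exp (-ψ y + σ * y))

/-- The unnormalised `n`-th moment of the density `exp (-ψ y + σ y)`. -/
def expMoment (ψ : ℝ → ℝ) (n : ℕ) (σ : ℝ) : ℝ :=
  ∫ y : ℝ, y ^ n * Real.exp (-ψ y + σ * y)

/-- A differentiable function with monotone derivative lies above its tangent lines. -/
lemma tangent_le {f f' : ℝ → ℝ} (hf : ∀ x, HasDerivAt f (f' x) x) (hm : Monotone f') (a b : ℝ) :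
    f a + f' a * (b - a) ≤ f b := by
  have hd : deriv f = f' := funext fun x => (hf x).deriv
  have hc : ConvexOn ℝ Set.univ f :=
    Monotone.convexOn_univ_of_deriv (fun x => (hf x).differentiableAt) (hd ▸ hm)
  rcases lt_trichotomy a b with h | h | h
  · have := hc.le_slope_of_hasDerivAt (Set.mem_univ a) (Set.mem_univ b) h (hf a)
    rw [slope_def_field, le_div_iff₀ (by linarith)] at this
    linarith
  · subst h; simp
  · have := hc.slope_le_of_hasDerivAt (Set.mem_univ b) (Set.mem_univ a) h (hf a)
    rw [slope_def_field, div_le_iff₀ (by linarith)] at this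
    linarith

/-! ### Growth of the potential and Gaussian decay -/

section Potential

variable {ψ : ℝ → ℝ} {κ₁ κ₂ : ℝ}

lemma hasDerivAt_potential (hψ : ContDiff ℝ 2 ψ) (y : ℝ) : HasDerivAt ψ (deriv ψ y) y :=
  (hψ.differentiable (by norm_num) y).hasDerivAt

lemma hasDerivAt_deriv_potential (hψ : ContDiff ℝ 2 ψ) (y : ℝ) :
    HasDerivAt (deriv ψ) (deriv (deriv ψ) y) y := by
  have h : ContDiff ℝ 1 (deriv ψ) := by
    have h2 : ContDiff ℝ (1 + 1) ψ := by
      rw [one_add_one_eq_two]; exact hψ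
    exact (contDiff_succ_iff_deriv.1 h2).2.2
  exact (h.differentiable (by norm_num) y).hasDerivAt

lemma monotone_deriv_sub (hψ : ContDiff ℝ 2 ψ) (h : ∀ y, κ₁ ≤ deriv (deriv ψ) y) :
    Monotone fun y => deriv ψ y - κ₁ * y := by
  have hd : ∀ y, HasDerivAt (fun y => deriv ψ y - κ₁ * y) (deriv (deriv ψ) y - κ₁) y := fun y => by
    exact ((hasDerivAt_deriv_potential hψ y).sub
      ((hasDerivAt_id y).const_mul κ₁)).congr_deriv (by simp)
  refine monotone_of_deriv_nonneg (fun y => (hd y).differentiableAt) fun y => ?_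
  rw [(hd y).deriv]
  linarith [h y]

lemma monotone_sub_deriv (hψ : ContDiff ℝ 2 ψ) (h : ∀ y, deriv (deriv ψ) y ≤ κ₂) :
    Monotone fun y => κ₂ * y - deriv ψ y := by
  have hd : ∀ y, HasDerivAt (fun y => κ₂ * y - deriv ψ y) (κ₂ - deriv (deriv ψ) y) y := fun y => by
    exact (((hasDerivAt_id y).const_mul κ₂).sub
      (hasDerivAt_deriv_potential hψ y)).congr_deriv (by simp)
  refine monotone_of_deriv_nonneg (fun y => (hd y).differentiableAt) fun y => ?_
  rw [(hd y).deriv]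
  linarith [h y]

lemma mul_sq_le_mul_deriv_sub (hψ : ContDiff ℝ 2 ψ) (h : ∀ y, κ₁ ≤ deriv (deriv ψ) y) (m y : ℝ) :
    κ₁ * (y - m) ^ 2 ≤ (y - m) * (deriv ψ y - deriv ψ m) := by
  rcases le_total m y with hy | hy
  · have := monotone_deriv_sub hψ h hy
    simp only at this
    nlinarith [mul_nonneg (sub_nonneg.2 hy) (sub_nonneg.2 this)]
  · have := monotone_deriv_sub hψ h hy
    simp only at this
    nlinarith [mul_nonneg (sub_nonneg.2 hy) (sub_nonneg.2 this)]

lemma mul_deriv_sub_le_mul_sq (hψ : ContDiff ℝ 2 ψ) (h : ∀ y, deriv (deriv ψ) y ≤ κ₂) (m y : ℝ) :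
    (y - m) * (deriv ψ y - deriv ψ m) ≤ κ₂ * (y - m) ^ 2 := by
  rcases le_total m y with hy | hy
  · have := monotone_sub_deriv hψ h hy
    simp only at this
    nlinarith [mul_nonneg (sub_nonneg.2 hy) (sub_nonneg.2 this)]
  · have := monotone_sub_deriv hψ h hy
    simp only at this
    nlinarith [mul_nonneg (sub_nonneg.2 hy) (sub_nonneg.2 this)]

lemma quadratic_le_potential (hψ : ContDiff ℝ 2 ψ) (h : ∀ y, κ₁ ≤ deriv (deriv ψ) y) (y : ℝ) :
    ψ 0 + deriv ψ 0 * y + κ₁ / 2 * y ^ 2 ≤ ψ y := by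
  have hd : ∀ y, HasDerivAt (fun y => ψ y - κ₁ / 2 * y ^ 2) (deriv ψ y - κ₁ * y) y := fun y => by
    refine ((hasDerivAt_potential hψ y).sub ((hasDerivAt_pow 2 y).const_mul (κ₁ / 2))).congr_deriv ?_
    simp; ring
  have := tangent_le hd (monotone_deriv_sub hψ h) 0 y
  simp at this
  linarith

lemma integrable_exp_potential (hψ : ContDiff ℝ 2 ψ) (hκ₁ : 0 < κ₁)
    (h : ∀ y, κ₁ ≤ deriv (deriv ψ) y) (σ : ℝ) :
    Integrable fun y : ℝ => Real.exp (-ψ y + σ * y) := by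
  have hg := (integrable_exp_neg_mul_sq (b := κ₁ / 4) (by positivity)).const_mul
    (Real.exp (-ψ 0 + (σ - deriv ψ 0) ^ 2 / κ₁))
  have hc : Continuous ψ := hψ.continuous
  refine hg.mono' (by fun_prop) (Filter.Eventually.of_forall fun y => ?_)
  rw [Real.norm_eq_abs, abs_of_pos (Real.exp_pos _), ← Real.exp_add, Real.exp_le_exp]
  have h1 := quadratic_le_potential hψ h y
  -- Young's inequality: `b y ≤ κ₁ y² / 4 + b² / κ₁`, with `b = σ - ψ' 0`.
  have h2 : (σ - deriv ψ 0) * y ≤ κ₁ / 4 * y ^ 2 + (σ - deriv ψ 0) ^ 2 / κ₁ := by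
    have e : κ₁ / 4 * y ^ 2 + (σ - deriv ψ 0) ^ 2 / κ₁ - (σ - deriv ψ 0) * y
        = (κ₁ * y / 2 - (σ - deriv ψ 0)) ^ 2 / κ₁ := by
      field_simp; ring
    have : 0 ≤ (κ₁ * y / 2 - (σ - deriv ψ 0)) ^ 2 / κ₁ := by positivity
    linarith
  linarith

/-! ### Moments of the tilted density -/

/-- The measure on `ℝ` with density `exp (-ψ)`; its moment generating function is
`expMoment ψ 0`. -/
def potentialMeasure (ψ : ℝ → ℝ) : Measure ℝ :=
  volume.withDensity fun y => ENNReal.ofReal (Real.exp (-ψ y))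

lemma integrable_potentialMeasure_iff (hψ : Continuous ψ) (n : ℕ) (σ : ℝ) :
    Integrable (fun y => y ^ n * Real.exp (σ * y)) (potentialMeasure ψ) ↔
      Integrable fun y : ℝ => y ^ n * Real.exp (-ψ y + σ * y) := by
  rw [potentialMeasure, integrable_withDensity_iff_integrable_smul' (by fun_prop) (by simp)]
  refine iff_of_eq (congrArg (fun f => Integrable f volume) (funext fun y => ?_))
  rw [ENNReal.toReal_ofReal (Real.exp_pos _).le, Real.exp_add, smul_eq_mul]
  ring

lemma integral_potentialMeasure (hψ : Continuous ψ) (n : ℕ) (σ : ℝ) :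
    ∫ y, y ^ n * Real.exp (σ * y) ∂(potentialMeasure ψ) = expMoment ψ n σ := by
  rw [potentialMeasure, integral_withDensity_eq_integral_toReal_smul (by fun_prop) (by simp),
    expMoment]
  refine integral_congr_ae (Filter.Eventually.of_forall fun y => ?_)
  simp only
  rw [ENNReal.toReal_ofReal (Real.exp_pos _).le, Real.exp_add, smul_eq_mul]
  ring

lemma integrableExpSet_potentialMeasure (hψ : ContDiff ℝ 2 ψ) (hκ₁ : 0 < κ₁)
    (h : ∀ y, κ₁ ≤ deriv (deriv ψ) y) :
    ProbabilityTheory.integrableExpSet id (potentialMeasure ψ) = Set.univ := by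
  refine Set.eq_univ_of_forall fun σ => ?_
  have := (integrable_potentialMeasure_iff hψ.continuous 0 σ).2
    (by simpa using integrable_exp_potential hψ hκ₁ h σ)
  simpa [ProbabilityTheory.integrableExpSet] using this

lemma integrable_pow_mul_exp_potential (hψ : ContDiff ℝ 2 ψ) (hκ₁ : 0 < κ₁)
    (h : ∀ y, κ₁ ≤ deriv (deriv ψ) y) (n : ℕ) (σ : ℝ) :
    Integrable fun y : ℝ => y ^ n * Real.exp (-ψ y + σ * y) := by
  rw [← integrable_potentialMeasure_iff hψ.continuous]
  exact ProbabilityTheory.integrable_pow_mul_exp_of_mem_interior_integrableExpSet (X := id)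
    (by simp [integrableExpSet_potentialMeasure hψ hκ₁ h]) n

lemma integrable_sub_sq_mul_exp_potential (hψ : ContDiff ℝ 2 ψ) (hκ₁ : 0 < κ₁)
    (h : ∀ y, κ₁ ≤ deriv (deriv ψ) y) (m σ : ℝ) :
    Integrable fun y : ℝ => (y - m) ^ 2 * Real.exp (-ψ y + σ * y) := by
  have hI := integrable_pow_mul_exp_potential hψ hκ₁ h
  refine (((hI 2 σ).sub ((hI 1 σ).const_mul (2 * m))).add
    ((hI 0 σ).const_mul (m ^ 2))).congr (Filter.Eventually.of_forall fun y => ?_)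
  simp; ring

lemma hasDerivAt_expMoment (hψ : ContDiff ℝ 2 ψ) (hκ₁ : 0 < κ₁)
    (h : ∀ y, κ₁ ≤ deriv (deriv ψ) y) (n : ℕ) (σ : ℝ) :
    HasDerivAt (expMoment ψ n) (expMoment ψ (n + 1) σ) σ := by
  have := ProbabilityTheory.hasDerivAt_integral_pow_mul_exp_real (X := id)
    (μ := potentialMeasure ψ) (t := σ)
    (by simp [integrableExpSet_potentialMeasure hψ hκ₁ h]) n
  simpa only [id, integral_potentialMeasure hψ.continuous] using this

lemma expMoment_zero_pos (hψ : ContDiff ℝ 2 ψ) (hκ₁ : 0 < κ₁)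
    (h : ∀ y, κ₁ ≤ deriv (deriv ψ) y) (σ : ℝ) : 0 < expMoment ψ 0 σ := by
  simpa [expMoment] using integral_exp_pos (integrable_exp_potential hψ hκ₁ h σ)

lemma Psi_eq (σ : ℝ) : Psi ψ σ = expMoment ψ 1 σ / expMoment ψ 0 σ := by
  simp [Psi, expMoment]

lemma hasDerivAt_log_expMoment (hψ : ContDiff ℝ 2 ψ) (hκ₁ : 0 < κ₁)
    (h : ∀ y, κ₁ ≤ deriv (deriv ψ) y) (σ : ℝ) :
    HasDerivAt (fun σ => Real.log (expMoment ψ 0 σ)) (Psi ψ σ) σ := by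
  rw [Psi_eq]
  exact (hasDerivAt_expMoment hψ hκ₁ h 0 σ).log (expMoment_zero_pos hψ hκ₁ h σ).ne'

/-- `Ψ'(σ)` is the variance of the normalised density. -/
lemma hasDerivAt_Psi (hψ : ContDiff ℝ 2 ψ) (hκ₁ : 0 < κ₁)
    (h : ∀ y, κ₁ ≤ deriv (deriv ψ) y) (σ : ℝ) :
    HasDerivAt (Psi ψ)
      ((∫ y : ℝ, (y - Psi ψ σ) ^ 2 * Real.exp (-ψ y + σ * y)) / expMoment ψ 0 σ) σ := by
  have hM := (expMoment_zero_pos hψ hκ₁ h σ).ne'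
  have hfun : Psi ψ = fun σ => expMoment ψ 1 σ / expMoment ψ 0 σ := funext Psi_eq
  have hd := (hasDerivAt_expMoment hψ hκ₁ h 1 σ).div (hasDerivAt_expMoment hψ hκ₁ h 0 σ) hM
  have hI := integrable_pow_mul_exp_potential hψ hκ₁ h
  have hv : (∫ y : ℝ, (y - Psi ψ σ) ^ 2 * Real.exp (-ψ y + σ * y)) =
      expMoment ψ 2 σ - 2 * Psi ψ σ * expMoment ψ 1 σ + Psi ψ σ ^ 2 * expMoment ψ 0 σ := by
    simp only [expMoment]
    have hA : Integrable fun y : ℝ => y ^ 2 * Real.exp (-ψ y + σ * y) -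
        2 * Psi ψ σ * (y ^ 1 * Real.exp (-ψ y + σ * y)) := (hI 2 σ).sub ((hI 1 σ).const_mul _)
    rw [← integral_const_mul, ← integral_const_mul,
      ← integral_sub (hI 2 σ) ((hI 1 σ).const_mul _), ← integral_add hA ((hI 0 σ).const_mul _)]
    exact integral_congr_ae (Filter.Eventually.of_forall fun y => by simp only; ring)
  rw [hv, hfun]
  refine hd.congr_deriv ?_
  simp only [zero_add, one_add_one_eq_two]
  field_simp
  ring

/-! ### Variance bounds -/

/-- Integration by parts: the covariance of `y` and `ψ' y` under the normalised density is `1`. -/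
lemma integral_sub_mul_deriv_sub (hψ : ContDiff ℝ 2 ψ) (hκ₁ : 0 < κ₁)
    (h : ∀ y, κ₁ ≤ deriv (deriv ψ) y ∧ deriv (deriv ψ) y ≤ κ₂) (σ : ℝ) :
    Integrable (fun y : ℝ => (y - Psi ψ σ) * (deriv ψ y - deriv ψ (Psi ψ σ)) *
        Real.exp (-ψ y + σ * y)) ∧
    ∫ y : ℝ, (y - Psi ψ σ) * (deriv ψ y - deriv ψ (Psi ψ σ)) * Real.exp (-ψ y + σ * y) =
      expMoment ψ 0 σ := by
  have h1 := fun y => (h y).1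
  have h2 := fun y => (h y).2
  have hI := integrable_pow_mul_exp_potential hψ hκ₁ h1
  have hM := (expMoment_zero_pos hψ hκ₁ h1 σ).ne'
  have hm := Psi_eq (ψ := ψ) σ
  set m := Psi ψ σ
  have hI2 := integrable_sub_sq_mul_exp_potential hψ hκ₁ h1 m σ
  have hI1 : Integrable fun y : ℝ => (y - m) * Real.exp (-ψ y + σ * y) := by
    refine ((hI 1 σ).sub ((hI 0 σ).const_mul m)).congr (Filter.Eventually.of_forall fun y => ?_)
    simp; ring
  have hmean : ∫ y : ℝ, (y - m) * Real.exp (-ψ y + σ * y) = 0 := by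
    have : ∫ y : ℝ, (y - m) * Real.exp (-ψ y + σ * y) = expMoment ψ 1 σ - m * expMoment ψ 0 σ := by
      simp only [expMoment]
      rw [← integral_const_mul, ← integral_sub (hI 1 σ) ((hI 0 σ).const_mul _)]
      exact integral_congr_ae (Filter.Eventually.of_forall fun y => by simp only; ring)
    rw [this, hm]
    field_simp
    ring
  have hc : Continuous ψ := hψ.continuous
  have hc' : Continuous (deriv ψ) := hψ.continuous_deriv (by norm_num)
  have hJ : Integrable fun y : ℝ => (y - m) * (deriv ψ y - deriv ψ m) *
      Real.exp (-ψ y + σ * y) := by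
    refine (hI2.const_mul κ₂).mono' (by fun_prop) (Filter.Eventually.of_forall fun y => ?_)
    have hl := mul_sq_le_mul_deriv_sub hψ h1 m y
    have hu := mul_deriv_sub_le_mul_sq hψ h2 m y
    have h0 : 0 ≤ (y - m) * (deriv ψ y - deriv ψ m) := le_trans (by positivity) hl
    rw [Real.norm_eq_abs, abs_of_nonneg (by positivity), ← mul_assoc]
    gcongr
  refine ⟨hJ, ?_⟩
  have hderiv : ∀ y, HasDerivAt (fun y : ℝ => (y - m) * Real.exp (-ψ y + σ * y))
      (y ^ 0 * Real.exp (-ψ y + σ * y)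
        - (y - m) * (deriv ψ y - deriv ψ m) * Real.exp (-ψ y + σ * y)
        + (σ - deriv ψ m) * ((y - m) * Real.exp (-ψ y + σ * y))) y := fun y => by
    have e : HasDerivAt (fun y => -ψ y + σ * y) (-deriv ψ y + σ * 1) y :=
      (hasDerivAt_potential hψ y).neg.add ((hasDerivAt_id y).const_mul σ)
    refine (((hasDerivAt_id y).sub_const m).mul e.exp).congr_deriv ?_
    simp; ring
  have h0 := integral_eq_zero_of_hasDerivAt_of_integrable hderiv
    (((hI 0 σ).sub hJ).add (hI1.const_mul _)) hI1
  have hA : Integrable fun y : ℝ => y ^ 0 * Real.exp (-ψ y + σ * y) -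
      (y - m) * (deriv ψ y - deriv ψ m) * Real.exp (-ψ y + σ * y) := (hI 0 σ).sub hJ
  rw [integral_add hA (hI1.const_mul _), integral_sub (hI 0 σ) hJ,
    integral_const_mul, hmean] at h0
  simp only [expMoment]
  linarith

lemma deriv_Psi_bounds (hψ : ContDiff ℝ 2 ψ) (hκ₁ : 0 < κ₁)
    (h : ∀ y, κ₁ ≤ deriv (deriv ψ) y ∧ deriv (deriv ψ) y ≤ κ₂) (σ : ℝ) :
    κ₁ * deriv (Psi ψ) σ ≤ 1 ∧ 1 ≤ κ₂ * deriv (Psi ψ) σ := by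
  have h1 := fun y => (h y).1
  have h2 := fun y => (h y).2
  have hM := expMoment_zero_pos hψ hκ₁ h1 σ
  obtain ⟨hJ, hJe⟩ := integral_sub_mul_deriv_sub hψ hκ₁ h σ
  rw [(hasDerivAt_Psi hψ hκ₁ h1 σ).deriv]
  set m := Psi ψ σ
  have hI2 := integrable_sub_sq_mul_exp_potential hψ hκ₁ h1 m σ
  rw [← mul_div_assoc, ← mul_div_assoc, div_le_one hM, one_le_div hM, ← hJe,
    ← integral_const_mul, ← integral_const_mul]
  constructor
  · refine integral_mono (hI2.const_mul _) hJ fun y => ?_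
    simp only
    rw [← mul_assoc]
    exact mul_le_mul_of_nonneg_right (mul_sq_le_mul_deriv_sub hψ h1 m y) (Real.exp_pos _).le
  · refine integral_mono hJ (hI2.const_mul _) fun y => ?_
    simp only
    rw [← mul_assoc]
    exact mul_le_mul_of_nonneg_right (mul_deriv_sub_le_mul_sq hψ h2 m y) (Real.exp_pos _).le

end Potential

/-! ### The Legendre transform -/

/-- A differentiable function whose derivative is at least `c > 0` is onto. -/
lemma surjective_of_le_deriv {f : ℝ → ℝ} {c : ℝ} (hf : Differentiable ℝ f) (hc : 0 < c)
    (h : ∀ x, c ≤ deriv f x) : Function.Surjective f := by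
  have hd : ∀ y, HasDerivAt (fun y => f y - c * y) (deriv f y - c) y := fun y => by
    exact ((hf y).hasDerivAt.sub ((hasDerivAt_id y).const_mul c)).congr_deriv (by simp)
  have hm : Monotone fun y => f y - c * y := by
    refine monotone_of_deriv_nonneg (fun y => (hd y).differentiableAt) fun y => ?_
    rw [(hd y).deriv]
    linarith [h y]
  refine hf.continuous.surjective ?_ ?_
  · refine Filter.tendsto_atTop_mono' (f₁ := fun y => f 0 + c * y) _ ?_
      (Filter.tendsto_atTop_add_const_left _ _ (Filter.tendsto_id.const_mul_atTop hc))
    filter_upwards [Filter.eventually_ge_atTop 0] with y hy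
    have := hm hy
    simp at this
    linarith
  · refine Filter.tendsto_atBot_mono' (f₁ := fun y => f 0 + c * y) _ ?_
      (Filter.tendsto_atBot_add_const_left _ _ (Filter.tendsto_id.const_mul_atBot hc))
    filter_upwards [Filter.eventually_le_atBot 0] with y hy
    have := hm hy
    simp at this
    linarith

/-- the supremum defining `W(x)` is attained at a unique `σ_x`, which is
characterized by `Ψ(σ_x) = x`; moreover `W'(x) = σ_x`, `W''(x) = 1/Ψ'(σ_x)` and
`κ₁ ≤ W''(x) ≤ κ₂`. -/
theorem legendre_transform_properties
    (ψ : ℝ → ℝ) (κ₁ κ₂ : ℝ)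
    (hψ : ContDiff ℝ 2 ψ) (hκ₁ : 0 < κ₁) (hκ : κ₁ ≤ κ₂)
    (hψ'' : ∀ y : ℝ, κ₁ ≤ deriv (deriv ψ) y ∧ deriv (deriv ψ) y ≤ κ₂) :
    ∀ x : ℝ, ∃ σx : ℝ,
      (∀ σ : ℝ,
        σ * x - Real.log (∫ y : ℝ, Real.exp (-ψ y + σ * y)) ≤
        σx * x - Real.log (∫ y : ℝ, Real.exp (-ψ y + σx * y))) ∧
      (∀ σ' : ℝ,
        (∀ σ : ℝ,
          σ * x - Real.log (∫ y : ℝ, Real.exp (-ψ y + σ * y)) ≤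
          σ' * x - Real.log (∫ y : ℝ, Real.exp (-ψ y + σ' * y))) → σ' = σx) ∧
      Psi ψ σx = x ∧
      HasDerivAt (W ψ) σx x ∧
      DifferentiableAt ℝ (deriv (W ψ)) x ∧
      deriv (deriv (W ψ)) x = 1 / deriv (Psi ψ) σx ∧
      κ₁ ≤ deriv (deriv (W ψ)) x ∧ deriv (deriv (W ψ)) x ≤ κ₂ := by
  have h1 := fun y => (hψ'' y).1
  have hκ₂ : 0 < κ₂ := hκ₁.trans_le hκ
  have hbd := deriv_Psi_bounds hψ hκ₁ hψ''
  have hdiff : Differentiable ℝ (Psi ψ) := fun σ => (hasDerivAt_Psi hψ hκ₁ h1 σ).differentiableAt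
  have hlow : ∀ σ, 1 / κ₂ ≤ deriv (Psi ψ) σ := fun σ => by
    rw [div_le_iff₀ hκ₂]; linarith [(hbd σ).2]
  have hpos : ∀ σ, 0 < deriv (Psi ψ) σ := fun σ => lt_of_lt_of_le (by positivity) (hlow σ)
  have hmono : StrictMono (Psi ψ) := strictMono_of_deriv_pos hpos
  let e : ℝ ≃o ℝ := hmono.orderIsoOfSurjective _
    (surjective_of_le_deriv hdiff (by positivity) hlow)
  have hPe : ∀ x, Psi ψ (e.symm x) = x := fun x => e.apply_symm_apply x
  have hL : ∀ σ, HasDerivAt (fun σ => Real.log (∫ y : ℝ, Real.exp (-ψ y + σ * y))) (Psi ψ σ) σ := by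
    simpa [expMoment] using hasDerivAt_log_expMoment hψ hκ₁ h1
  have hmax : ∀ x σ : ℝ, σ * x - Real.log (∫ y : ℝ, Real.exp (-ψ y + σ * y)) ≤
      e.symm x * x - Real.log (∫ y : ℝ, Real.exp (-ψ y + e.symm x * y)) := fun x σ => by
    have := tangent_le hL hmono.monotone (e.symm x) σ
    rw [hPe] at this
    linarith
  have hW : W ψ = fun x =>
      e.symm x * x - Real.log (∫ y : ℝ, Real.exp (-ψ y + e.symm x * y)) := funext fun x =>
    le_antisymm (ciSup_le (hmax x))
      (le_ciSup (f := fun σ : ℝ => σ * x - Real.log (∫ y : ℝ, Real.exp (-ψ y + σ * y)))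
        ⟨_, Set.forall_mem_range.2 (hmax x)⟩ (e.symm x))
  have hinv : ∀ x, HasDerivAt e.symm (deriv (Psi ψ) (e.symm x))⁻¹ x := fun x =>
    HasDerivAt.of_local_left_inverse e.symm.continuous.continuousAt
      (hdiff _).hasDerivAt (hpos _).ne' (Filter.Eventually.of_forall hPe)
  have hW' : ∀ x, HasDerivAt (W ψ) (e.symm x) x := fun x => by
    rw [hW]
    refine (((hinv x).mul (hasDerivAt_id x)).sub
      ((hL (e.symm x)).comp x (hinv x))).congr_deriv ?_
    rw [hPe]
    simp; ring
  have hdW : deriv (W ψ) = e.symm := funext fun x => (hW' x).deriv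
  intro x
  have hddW : deriv (deriv (W ψ)) x = 1 / deriv (Psi ψ) (e.symm x) := by
    rw [hdW, (hinv x).deriv, one_div]
  refine ⟨e.symm x, hmax x, fun σ' hσ' => ?_, hPe x, hW' x, ?_, hddW, ?_, ?_⟩
  · -- A maximiser is a critical point, and `Ψ` is injective.
    have hd : HasDerivAt (fun σ => σ * x - Real.log (∫ y : ℝ, Real.exp (-ψ y + σ * y)))
        (x - Psi ψ σ') σ' := by
      exact (((hasDerivAt_id σ').mul_const x).sub (hL σ')).congr_deriv (by simp)
    have := IsLocalMax.hasDerivAt_eq_zero (Filter.Eventually.of_forall hσ') hd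
    refine hmono.injective ?_
    rw [hPe]
    linarith
  · rw [hdW]
    exact (hinv x).differentiableAt
  · rw [hddW, le_div_iff₀ (hpos _)]
    exact (hbd _).1
  · rw [hddW, div_le_iff₀ (hpos _)]
    exact (hbd _).2
end
end

section
/- For the harmonic chain with ψ(r) = K₁·r² and defect P(r) = K₂·r², K₁, K₂ > 0, and any coarsening parameters p ≥ 1, M ≥ 2 with N = p·(M−1) + 1, the coarse-grained free energy difference satisfies F_M^cg(x,P) − F_M^cg(x,0) = K₁·K₂·N·x²/( K₁·N + K₂·(N−1) ) + (1/2)·log( (K₁·N + K₂·(N−1))/(K₁·N) ); in particular it is independent of p and M and equals the defect-formation free energy F_N^P(x) − F_N(x) of the fully resolved chain with N atoms. -/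
/-!
All four partition functions are those of chains of harmonic springs. Two springs of stiffness `s`
and `c` in series, with the atom between them integrated out, act as one spring of stiffness
`s c / (s + c)`, up to the factor `√(π / (s + c))` (`lintegral_two_springs`). Integrating the atoms
out one after the other gives the partition function of a chain whose first bond has stiffness `a`
and whose `n` other bonds have stiffness `c` (`lintegral_springE`).

The defect stiffens the first bond from `K₁` to `K₁ + K₂`, and coarsening by `p` gives the other
bonds stiffness `K₁ / p` (`Vcg_add_defect`). In the difference of free energies the prefactors
depending on `n` and `c` only cancel, and what remains depends on `p` and `M` through
`N = p (M - 1) + 1` alone (`Fcg_sub`). The fully resolved chain is the case `p = 1`, `M = N`.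
-/

noncomputable section

open MeasureTheory Real

/-- Extend interior degrees of freedom `w : ℝ^(n-1)` to the whole chain via the
boundary conditions `w 0 = 0` and `w n = b`. -/
def bc (n : ℕ) (b : ℝ) (w : Fin (n - 1) → ℝ) : ℕ → ℝ := fun i =>
  if h : 0 < i ∧ i < n then w ⟨i - 1, by omega⟩ else if i = 0 then 0 else b

/-- The chain energy `∑_{i=1}^n φ_i (u_i - u_{i-1})` with boundary conditions
`u 0 = 0`, `u n = b`. -/
def chainE (φ : ℕ → ℝ → ℝ) (n : ℕ) (b : ℝ) (u : Fin (n - 1) → ℝ) : ℝ :=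
  ∑ i ∈ Finset.range n, φ (i + 1) (bc n b u (i + 1) - bc n b u i)

/-- The free energy of the fully resolved chain with `N` atoms:
`-log ∫_{ℝ^{N-1}} exp(-∑ φ_i(u_i-u_{i-1}) - defect(u₁)) du`, `u₀ = 0`, `u_N = N x`. -/
def freeEnergy (φ : ℕ → ℝ → ℝ) (defect : ℝ → ℝ) (N : ℕ) (x : ℝ) : ℝ :=
  - Real.log (∫ u : Fin (N - 1) → ℝ,
      Real.exp (-(chainE φ N (N * x) u) - defect (bc N (N * x) u 1)))

/-- The coarse-grained harmonic chain energy with fully resolved first bond: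
`V_cg(w) = ψ(w₁ - w₀) + ∑_{j=2}^M p ψ(p⁻¹ (w_j - w_{j-1}))` with `ψ(r) = K₁ r²`,
boundary conditions `w₀ = 0`, `w_M = b`. -/
def Vcg (K₁ : ℝ) (p M : ℕ) (b : ℝ) (w : Fin (M - 1) → ℝ) : ℝ :=
  K₁ * (bc M b w 1 - bc M b w 0) ^ 2 +
    ∑ j ∈ Finset.Icc 2 M, (p : ℝ) * K₁ * ((bc M b w j - bc M b w (j - 1)) / p) ^ 2

/-- The coarse-grained free energy with defect term `defect(w₁)`. -/
def Fcg (K₁ : ℝ) (p M N : ℕ) (x : ℝ) (defect : ℝ → ℝ) : ℝ :=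
  - Real.log (∫ w : Fin (M - 1) → ℝ,
      Real.exp (-(Vcg K₁ p M (N * x) w) - defect (bc M (N * x) w 1)))

/-- The energy `a u₁² + ∑_{j=1}^{n} c (u_{j+1} - u_j)²` of a harmonic chain whose first bond,
attached to the origin, has stiffness `a` and whose other `n` bonds have stiffness `c`. -/
def springE (a c : ℝ) (n : ℕ) (u : ℕ → ℝ) : ℝ :=
  a * u 1 ^ 2 + ∑ j ∈ Finset.range n, c * (u (j + 2) - u (j + 1)) ^ 2

lemma measurable_bc (n : ℕ) (b : ℝ) (i : ℕ) :
    Measurable (fun w : Fin (n - 1) → ℝ => bc n b w i) := by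
  unfold bc
  split_ifs <;> fun_prop

lemma measurable_springE (a c : ℝ) (n m : ℕ) (b : ℝ) :
    Measurable (fun w : Fin (m - 1) → ℝ => springE a c n (bc m b w)) := by
  unfold springE
  have h := measurable_bc m b
  fun_prop

lemma bc_zero (n : ℕ) (b : ℝ) (w : Fin (n - 1) → ℝ) : bc n b w 0 = 0 := by
  simp [bc]

lemma bc_end (n : ℕ) (b : ℝ) (w : Fin (n + 1 - 1) → ℝ) : bc (n + 1) b w (n + 1) = b := by
  simp [bc]

/-- Appending the position `t` of the last interior atom turns `t` into the boundary value of the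
chain that is one bond shorter. -/
lemma bc_insertNth (n : ℕ) (b t : ℝ) (w : Fin n → ℝ) (i : ℕ) (hi : i ≤ n + 1) :
    bc (n + 2) b ((Fin.last n).insertNth (α := fun _ => ℝ) t w) i = bc (n + 1) t w i := by
  rcases Nat.eq_zero_or_pos i with rfl | h0
  · simp [bc]
  rcases hi.lt_or_eq with h | rfl
  · have h1 : 0 < i ∧ i < n + 2 := ⟨h0, by omega⟩
    have h2 : 0 < i ∧ i < n + 1 := ⟨h0, h⟩
    simp only [bc, h1, h2, and_self, dite_true]
    have : (⟨i - 1, by omega⟩ : Fin (n + 1)) = Fin.castSucc ⟨i - 1, by omega⟩ := rfl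
    rw [Fin.insertNth_last']
    erw [this, Fin.snoc_castSucc]
  · have h1 : 0 < n + 1 ∧ n + 1 < n + 2 := by omega
    simp only [bc, h1, and_self, dite_true]
    rw [Fin.insertNth_last']
    simp
    exact Fin.snoc_last (α := fun _ => ℝ) t w

lemma springE_insertNth (a c : ℝ) (n : ℕ) (b t : ℝ) (w : Fin n → ℝ) :
    springE a c (n + 1) (bc (n + 2) b ((Fin.last n).insertNth (α := fun _ => ℝ) t w)) =
      springE a c n (bc (n + 1) t w) + c * (b - t) ^ 2 := by
  unfold springE
  rw [Finset.sum_range_succ, bc_end, bc_insertNth _ _ _ _ _ le_rfl, bc_end,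
    bc_insertNth _ _ _ _ 1 (by omega), ← add_assoc]
  congr 2
  refine Finset.sum_congr rfl fun j hj => ?_
  rw [Finset.mem_range] at hj
  rw [bc_insertNth _ _ _ _ _ (by omega), bc_insertNth _ _ _ _ _ (by omega)]

/-- Two springs in series: integrating out the atom between them leaves a spring of stiffness
`s c / (s + c)`, by completing the square. -/
lemma lintegral_two_springs (s c y : ℝ) (hs : 0 < s) (hc : 0 < c) :
    ∫⁻ t : ℝ, ENNReal.ofReal (exp (-(s * t ^ 2)) * exp (-(c * (y - t) ^ 2))) =
      ENNReal.ofReal (√(π / (s + c)) * exp (-(s * c / (s + c) * y ^ 2))) := by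
  have hsc : 0 < s + c := add_pos hs hc
  have key : ∀ t : ℝ, exp (-(s * t ^ 2)) * exp (-(c * (y - t) ^ 2)) =
      exp (-(s + c) * (t - c * y / (s + c)) ^ 2) * exp (-(s * c / (s + c) * y ^ 2)) := by
    intro t
    rw [← exp_add, ← exp_add]
    congr 1
    field_simp
    ring
  have hint : Integrable fun t : ℝ => exp (-(s + c) * (t - c * y / (s + c)) ^ 2) :=
    (integrable_exp_neg_mul_sq hsc).comp_sub_right (c * y / (s + c))
  simp_rw [key]
  rw [← ofReal_integral_eq_lintegral_ofReal (hint.mul_const _)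
    (Filter.Eventually.of_forall fun t => by positivity), integral_mul_const,
    integral_sub_right_eq_self (fun t : ℝ => exp (-(s + c) * t ^ 2)), integral_gaussian]

/-- The partition function of the spring chain with `n` interior atoms. The effective stiffness
`a c / (c + n a)` is the series law `1 / s = 1 / a + n / c`. -/
lemma lintegral_springE (a c : ℝ) (ha : 0 < a) (hc : 0 < c) (n : ℕ) (y : ℝ) :
    ∫⁻ w : Fin n → ℝ, ENNReal.ofReal (exp (-springE a c n (bc (n + 1) y w))) =
      ENNReal.ofReal (√((π / c) ^ n * (c / (c + n * a))) *
        exp (-(a * c / (c + n * a) * y ^ 2))) := by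
  induction n generalizing y with
  | zero =>
    rw [volume_pi, Measure.pi_of_empty _ (fun i => i.elim0), lintegral_dirac]
    simp [springE, bc, hc.ne']
  | succ n ih =>
    have hd : 0 < c + n * a := by positivity
    have hd' : 0 < c + (n + 1) * a := by positivity
    have hs : 0 < a * c / (c + n * a) := by positivity
    let e := MeasurableEquiv.piFinSuccAbove (fun _ : Fin (n + 1) => ℝ) (Fin.last n)
    have he : MeasurePreserving e.symm :=
      (volume_preserving_piFinSuccAbove (fun _ : Fin (n + 1) => ℝ) (Fin.last n)).symm
    have hm : Measurable fun w : Fin (n + 1) → ℝ =>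
        ENNReal.ofReal (exp (-springE a c (n + 1) (bc (n + 1 + 1) y w))) :=
      (measurable_springE a c (n + 1) (n + 2) y).neg.exp.ennreal_ofReal
    rw [← he.lintegral_comp hm, Measure.volume_eq_prod,
      lintegral_prod (fun z => ENNReal.ofReal
        (exp (-springE a c (n + 1) (bc (n + 1 + 1) y (e.symm z))))) (hm.comp e.symm.measurable).aemeasurable]
    have hin : ∀ t : ℝ, ∫⁻ w : Fin n → ℝ, ENNReal.ofReal
          (exp (-springE a c (n + 1) (bc (n + 1 + 1) y (e.symm (t, w))))) =
        ENNReal.ofReal √((π / c) ^ n * (c / (c + n * a))) * ENNReal.ofReal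
          (exp (-(a * c / (c + n * a) * t ^ 2)) * exp (-(c * (y - t) ^ 2))) := by
      intro t
      have h1 : ∀ w : Fin n → ℝ, ENNReal.ofReal
          (exp (-springE a c (n + 1) (bc (n + 1 + 1) y (e.symm (t, w))))) =
          ENNReal.ofReal (exp (-springE a c n (bc (n + 1) t w))) *
            ENNReal.ofReal (exp (-(c * (y - t) ^ 2))) := by
        intro w
        have h2 : springE a c (n + 1) (bc (n + 1 + 1) y (e.symm (t, w))) = _ :=
          springE_insertNth a c n y t w
        rw [h2, neg_add, exp_add, ENNReal.ofReal_mul (by positivity)]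
      simp_rw [h1]
      have hm' : Measurable fun w : Fin n → ℝ =>
          ENNReal.ofReal (exp (-springE a c n (bc (n + 1) t w))) :=
        (measurable_springE a c n (n + 1) t).neg.exp.ennreal_ofReal
      rw [lintegral_mul_const _ hm', ih t,
        ← ENNReal.ofReal_mul (by positivity), ← ENNReal.ofReal_mul (by positivity), mul_assoc]
    simp_rw [hin]
    rw [lintegral_const_mul _ (by fun_prop), lintegral_two_springs _ _ _ hs hc,
      ← ENNReal.ofReal_mul (by positivity), ← mul_assoc, ← Real.sqrt_mul (by positivity)]
    have hsc : a * c / (c + n * a) + c = c * (c + (n + 1) * a) / (c + n * a) := by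
      field_simp
      ring
    have e1 : (π / c) ^ n * (c / (c + n * a)) * (π / (a * c / (c + n * a) + c)) =
        (π / c) ^ (n + 1) * (c / (c + (n + 1) * a)) := by
      rw [hsc, pow_succ]
      field_simp
    have e2 : a * c / (c + n * a) * c / (a * c / (c + n * a) + c) =
        a * c / (c + (n + 1) * a) := by
      rw [hsc]
      field_simp
    push_cast
    rw [e1, e2]

lemma neg_log_integral_springE (a c : ℝ) (ha : 0 < a) (hc : 0 < c) (n : ℕ) (y : ℝ) :
    -log (∫ w : Fin n → ℝ, exp (-springE a c n (bc (n + 1) y w))) =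
      a * c / (c + n * a) * y ^ 2 - 1 / 2 * log ((π / c) ^ n * c) +
        1 / 2 * log (c + n * a) := by
  have hd : 0 < c + n * a := by positivity
  have hm : Measurable fun w : Fin n → ℝ => exp (-springE a c n (bc (n + 1) y w)) :=
    (measurable_springE a c n (n + 1) y).neg.exp
  rw [integral_eq_lintegral_of_nonneg_ae (Filter.Eventually.of_forall fun w => by positivity)
    hm.aestronglyMeasurable,
    lintegral_springE a c ha hc, ENNReal.toReal_ofReal (by positivity),
    log_mul (by positivity) (by positivity), log_exp, log_sqrt (by positivity), ← mul_div_assoc,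
    log_div (by positivity) (by positivity)]
  ring

/-- With a quadratic defect `K y²` (`K = 0` allowed) the coarse-grained chain is a spring chain:
the defect stiffens the first bond to `K₁ + K`, and a bond coarsened by `p` has stiffness
`K₁ / p`. -/
lemma Vcg_add_defect (K₁ K : ℝ) (p n : ℕ) (hp : 1 ≤ p) (b : ℝ) (w : Fin n → ℝ) :
    -(Vcg K₁ p (n + 1) b w) - K * bc (n + 1) b w 1 ^ 2 =
      -springE (K₁ + K) (K₁ / p) n (bc (n + 1) b w) := by
  have hp' : (p : ℝ) ≠ 0 := by positivity
  unfold Vcg springE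
  have hsum : ∑ j ∈ Finset.Icc 2 (n + 1),
        (p : ℝ) * K₁ * ((bc (n + 1) b w j - bc (n + 1) b w (j - 1)) / p) ^ 2 =
      ∑ j ∈ Finset.range n,
        K₁ / p * (bc (n + 1) b w (j + 2) - bc (n + 1) b w (j + 1)) ^ 2 := by
    rw [← Finset.Ico_add_one_right_eq_Icc, Finset.sum_Ico_eq_sum_range]
    refine Finset.sum_congr (by congr 1) fun j _ => ?_
    rw [show 2 + j - 1 = j + 1 by omega, add_comm 2 j]
    field_simp
  rw [hsum, bc_zero]
  ring

lemma Fcg_quadratic (K₁ K : ℝ) (hK₁ : 0 < K₁) (hK : 0 ≤ K) (p n N : ℕ) (hp : 1 ≤ p) (x : ℝ) :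
    Fcg K₁ p (n + 1) N x (fun y => K * y ^ 2) =
      (K₁ + K) * (K₁ / p) / (K₁ / p + n * (K₁ + K)) * (N * x) ^ 2
        - 1 / 2 * log ((π / (K₁ / p)) ^ n * (K₁ / p))
        + 1 / 2 * log (K₁ / p + n * (K₁ + K)) := by
  rw [← neg_log_integral_springE _ _ (by positivity) (by positivity)]
  unfold Fcg
  congr 2
  refine integral_congr_ae (Filter.Eventually.of_forall fun w => ?_)
  exact congrArg exp (Vcg_add_defect K₁ K p n hp (N * x) w)

lemma Fcg_sub (K₁ K₂ : ℝ) (hK₁ : 0 < K₁) (hK₂ : 0 < K₂)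
    (p M N : ℕ) (hp : 1 ≤ p) (hM : 2 ≤ M) (hN : N = p * (M - 1) + 1) (x : ℝ) :
    Fcg K₁ p M N x (fun y => K₂ * y ^ 2) - Fcg K₁ p M N x (fun _ => 0) =
      K₁ * K₂ * N * x ^ 2 / (K₁ * N + K₂ * ((N : ℝ) - 1)) +
        (1 / 2 : ℝ) * Real.log ((K₁ * N + K₂ * ((N : ℝ) - 1)) / (K₁ * N)) := by
  obtain ⟨n, rfl⟩ : ∃ n, M = n + 1 := ⟨M - 1, by omega⟩
  rw [Nat.add_sub_cancel] at hN
  have hp' : (0 : ℝ) < p := by exact_mod_cast hp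
  have hNr : (N : ℝ) = p * n + 1 := by rw [hN]; push_cast; ring
  have h0 : (fun _ : ℝ => (0 : ℝ)) = fun y => 0 * y ^ 2 := by simp
  rw [h0, Fcg_quadratic K₁ K₂ hK₁ hK₂.le p n N hp, Fcg_quadratic K₁ 0 hK₁ le_rfl p n N hp]
  have e1 : K₁ / p + n * (K₁ + K₂) = (K₁ * N + K₂ * ((N : ℝ) - 1)) / p := by
    rw [hNr]; field_simp; ring
  have e2 : K₁ / p + n * (K₁ + 0) = K₁ * N / p := by
    rw [hNr]; field_simp; ring
  have hN0 : (0 : ℝ) < N := by rw [hNr]; positivity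
  have hA : 0 < K₁ * N + K₂ * ((N : ℝ) - 1) := by
    rw [hNr, add_sub_cancel_right]; positivity
  rw [e1, e2, log_div hA.ne' hp'.ne', log_div (by positivity) hp'.ne',
    log_div hA.ne' (by positivity)]
  have e3 : (K₁ + K₂) * (K₁ / p) / ((K₁ * N + K₂ * ((N : ℝ) - 1)) / p) * (N * x) ^ 2
      - (K₁ + 0) * (K₁ / p) / (K₁ * N / p) * (N * x) ^ 2 =
      K₁ * K₂ * N * x ^ 2 / (K₁ * N + K₂ * ((N : ℝ) - 1)) := by
    field_simp
    ring
  rw [← e3]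
  ring

/-- The fully resolved chain is the case `p = 1` of the coarse-grained one. -/
lemma freeEnergy_eq_Fcg (K₁ : ℝ) (defect : ℝ → ℝ) (N : ℕ) (hN : 1 ≤ N) (x : ℝ) :
    freeEnergy (fun _ y => K₁ * y ^ 2) defect N x = Fcg K₁ 1 N N x defect := by
  obtain ⟨n, rfl⟩ : ∃ n, N = n + 1 := ⟨N - 1, by omega⟩
  have h : ∀ b (u : Fin (n + 1 - 1) → ℝ),
      chainE (fun _ y => K₁ * y ^ 2) (n + 1) b u = Vcg K₁ 1 (n + 1) b u := by
    intro b u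
    unfold chainE Vcg
    rw [Finset.sum_range_succ', add_comm, ← Finset.Ico_add_one_right_eq_Icc,
      Finset.sum_Ico_eq_sum_range]
    congr 1
    refine Finset.sum_congr (by congr 1) fun j _ => ?_
    rw [show 2 + j - 1 = j + 1 by omega, add_comm 2 j]
    simp
  unfold freeEnergy Fcg
  simp_rw [h]

/-- for the harmonic chain, the coarse-grained free energy difference
is explicit, independent of `p` and `M`, and equals the defect-formation free energy
of the fully resolved chain with `N = p(M-1)+1` atoms. -/
theorem harmonic_coarse_graining_exact
    (K₁ K₂ : ℝ) (hK₁ : 0 < K₁) (hK₂ : 0 < K₂)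
    (p M N : ℕ) (hp : 1 ≤ p) (hM : 2 ≤ M) (hN : N = p * (M - 1) + 1) (x : ℝ) :
    Fcg K₁ p M N x (fun y => K₂ * y ^ 2) - Fcg K₁ p M N x (fun _ => 0) =
      K₁ * K₂ * N * x ^ 2 / (K₁ * N + K₂ * ((N : ℝ) - 1)) +
        (1 / 2 : ℝ) * Real.log ((K₁ * N + K₂ * ((N : ℝ) - 1)) / (K₁ * N)) ∧
    Fcg K₁ p M N x (fun y => K₂ * y ^ 2) - Fcg K₁ p M N x (fun _ => 0) =
      freeEnergy (fun _ y => K₁ * y ^ 2) (fun y => K₂ * y ^ 2) N x -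
        freeEnergy (fun _ y => K₁ * y ^ 2) (fun _ => 0) N x := by
  refine ⟨Fcg_sub K₁ K₂ hK₁ hK₂ p M N hp hM hN x, ?_⟩
  have hN2 : 2 ≤ N := by
    have : 1 * 1 ≤ p * (M - 1) := Nat.mul_le_mul hp (by omega)
    omega
  rw [freeEnergy_eq_Fcg _ _ N (by omega), freeEnergy_eq_Fcg _ _ N (by omega),
    Fcg_sub K₁ K₂ hK₁ hK₂ p M N hp hM hN x,
    Fcg_sub K₁ K₂ hK₁ hK₂ 1 N N le_rfl hN2 (by omega) x]
end
end
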